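/- The scalar function φ*(s) = -(1/m)·log(b/(b + m·s)) + (s/b)·log(-b/(m·s) - 1), defined on the open interval where -1/m < s·b < 0 (b ∈ {-1,1}), has second derivative φ*''(s) = -1/((b + m·s)·s), and this second derivative is strictly positive on the domain; hence φ* is strictly convex there. -/

import Mathlib

/-!
With `p = -m * s / b` the two logarithms become `-log (1 - p)` and `log ((1 - p) / p)`, so that
`φ* = (p * log p + (1 - p) * log (1 - p)) / m` is a negative multiple of the binary entropy of `p`.
The second derivative `-1 / (p * (1 - p))` of the binary entropy then gives that of `φ*`, and
`0 < p < 1` is the domain.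
-/

/-- The convex conjugate `φ*` of the scaled logistic loss `z ↦ log (1 + exp (-b * z)) / m`, for real
`m > 0` and `b ≠ 0`. The conjugate has domain `-(1 / m) < s / b < 0`, up to endpoints; outside it
the formula takes junk values, as `Real.log x = log |x|`. -/
noncomputable def logisticConj (m b : ℝ) : ℝ → ℝ := fun s =>
  -(1 / m) * Real.log (b / (b + m * s)) + (s / b) * Real.log (-b / (m * s) - 1)

theorem hasDerivAt_deriv_binEntropy {p : ℝ} (hp₀ : p ≠ 0) (hp₁ : p ≠ 1) :
    HasDerivAt (deriv Real.binEntropy) (-1 / (p * (1 - p))) p := by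
  have deriv2 : deriv (deriv Real.binEntropy) p = -1 / (p * (1 - p)) := Real.deriv2_binEntropy
  have deriv2_ne_zero : deriv (deriv Real.binEntropy) p ≠ 0 := by
    rw [deriv2]
    exact div_ne_zero (by norm_num) (mul_ne_zero hp₀ (sub_ne_zero.mpr hp₁.symm))
  exact deriv2 ▸ (differentiableAt_of_deriv_ne_zero deriv2_ne_zero).hasDerivAt

theorem convex_setOf_div_mem_Ioo (b l u : ℝ) : Convex ℝ {s : ℝ | l < s / b ∧ s / b < u} :=
  (convex_Ioo l u).linear_preimage (LinearMap.mulRight ℝ b⁻¹)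

section

variable {m b s : ℝ}

theorem logisticConj_eq_binEntropy (hm : m ≠ 0) (hb : b ≠ 0) :
    logisticConj m b = fun s => -(1 / m) * Real.binEntropy (-(m / b) * s) := by
  funext s
  obtain ⟨p, rfl⟩ : ∃ p, s = -(b / m) * p := ⟨-(m / b) * s, by field_simp⟩
  have entropy_arg : -(m / b) * (-(b / m) * p) = p := by field_simp
  have first_arg : b / (b + m * (-(b / m) * p)) = (1 - p)⁻¹ := by
    rw [show b + m * (-(b / m) * p) = b * (1 - p) by field_simp; ring, div_mul_cancel_left₀ hb]
  have second_arg : -b / (m * (-(b / m) * p)) - 1 = p⁻¹ - 1 := by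
    rw [show m * (-(b / m) * p) = -b * p by field_simp, div_mul_cancel_left₀ (neg_ne_zero.mpr hb)]
  have coefficient : -(b / m) * p / b = -(p / m) := by field_simp
  rw [logisticConj, entropy_arg, first_arg, second_arg, coefficient, Real.binEntropy]
  rcases eq_or_ne p 0 with rfl | hp₀
  · simp
  rcases eq_or_ne p 1 with rfl | hp₁
  · simp
  have odds : p⁻¹ - 1 = (1 - p) / p := by field_simp
  rw [odds, Real.log_div (sub_ne_zero.mpr hp₁.symm) hp₀, Real.log_inv, Real.log_inv]
  ring

theorem continuous_logisticConj (hm : m ≠ 0) (hb : b ≠ 0) : Continuous (logisticConj m b) := by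
  rw [logisticConj_eq_binEntropy hm hb]
  fun_prop

theorem deriv_logisticConj (hm : m ≠ 0) (hb : b ≠ 0) :
    deriv (logisticConj m b) = fun s => 1 / b * deriv Real.binEntropy (-(m / b) * s) := by
  funext s
  rw [logisticConj_eq_binEntropy hm hb, deriv_const_mul_field, deriv_comp_mul_left, smul_eq_mul]
  field_simp

theorem hasDerivAt_deriv_logisticConj (hm : m ≠ 0) (hb : b ≠ 0) (hs : s ≠ 0)
    (hbs : b + m * s ≠ 0) :
    HasDerivAt (deriv (logisticConj m b)) (-1 / ((b + m * s) * s)) s := by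
  have one_sub_arg : 1 - -(m / b) * s = (b + m * s) / b := by field_simp; ring
  have arg_ne_zero : -(m / b) * s ≠ 0 := mul_ne_zero (neg_ne_zero.mpr (div_ne_zero hm hb)) hs
  have arg_ne_one : -(m / b) * s ≠ 1 :=
    (sub_ne_zero.mp (one_sub_arg ▸ div_ne_zero hbs hb)).symm
  rw [deriv_logisticConj hm hb]
  refine (((hasDerivAt_deriv_binEntropy arg_ne_zero arg_ne_one).comp s
    (hasDerivAt_const_mul (-(m / b)))).const_mul (1 / b)).congr_deriv ?_
  rw [one_sub_arg]
  field_simp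

theorem add_mul_mul_self_neg (hm : 0 < m) (hb : b ≠ 0) (hlower : -(1 / m) < s / b)
    (hupper : s / b < 0) : (b + m * s) * s < 0 := by
  have factored : (b + m * s) * s = (m * b ^ 2) * ((s / b + 1 / m) * (s / b)) := by
    field_simp
    ring
  rw [factored]
  exact mul_neg_of_pos_of_neg (by positivity) (mul_neg_of_pos_of_neg (by linarith) hupper)

end

theorem stmt3_general {m b : ℝ} (hm : 0 < m) (hb : b ≠ 0) :
    (∀ s : ℝ, -(1 / m) < s / b → s / b < 0 →
      HasDerivAt (deriv (logisticConj m b)) (-1 / ((b + m * s) * s)) s ∧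
        0 < -1 / ((b + m * s) * s)) ∧
    StrictConvexOn ℝ {s : ℝ | -(1 / m) < s / b ∧ s / b < 0} (logisticConj m b) := by
  have second_deriv : ∀ s : ℝ, -(1 / m) < s / b → s / b < 0 →
      HasDerivAt (deriv (logisticConj m b)) (-1 / ((b + m * s) * s)) s ∧
        0 < -1 / ((b + m * s) * s) := by
    intro s hlower hupper
    have denom_neg := add_mul_mul_self_neg hm hb hlower hupper
    obtain ⟨hbs, hs⟩ := mul_ne_zero_iff.mp denom_neg.ne
    exact ⟨hasDerivAt_deriv_logisticConj hm.ne' hb hs hbs,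
      div_pos_of_neg_of_neg neg_one_lt_zero denom_neg⟩
  refine ⟨second_deriv, strictConvexOn_of_deriv2_pos' (convex_setOf_div_mem_Ioo b _ _)
    (continuous_logisticConj hm.ne' hb).continuousOn fun s ⟨hlower, hupper⟩ => ?_⟩
  obtain ⟨hderiv, hpos⟩ := second_deriv s hlower hupper
  exact hpos.trans_eq hderiv.deriv.symm

/-- Second derivative of the conjugate logistic loss is -1/((b+ms)s) > 0 on the domain,
    and the conjugate is strictly convex there. -/
theorem stmt3 (m : ℕ) (hm : 0 < m) (b : ℝ) (hb : b = 1 ∨ b = -1) :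
    (∀ s : ℝ, -(1 / (m : ℝ)) < s * b → s * b < 0 →
      HasDerivAt
        (deriv (fun s : ℝ =>
          -(1 / (m : ℝ)) * Real.log (b / (b + m * s)) +
            (s / b) * Real.log (-b / (m * s) - 1)))
        (-1 / ((b + m * s) * s)) s ∧ 0 < -1 / ((b + m * s) * s)) ∧
    StrictConvexOn ℝ {s : ℝ | -(1 / (m : ℝ)) < s * b ∧ s * b < 0}
      (fun s : ℝ =>
        -(1 / (m : ℝ)) * Real.log (b / (b + m * s)) +
          (s / b) * Real.log (-b / (m * s) - 1)) := by
  have mul_eq_div (s : ℝ) : s * b = s / b := by rcases hb with rfl | rfl <;> simp [div_neg]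
  simp only [mul_eq_div]
  exact stmt3_general (Nat.cast_pos.mpr hm) (by rcases hb with rfl | rfl <;> norm_num)
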